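/- Let m ∈ ℕ, let α > 0, and let n ≥ m. Let x_1,…,x_m ∈ ℂ list the roots of L_m^{(α−1)} with multiplicity, i.e., L_m^{(α−1)}(X) = ((−1)^m/m!)·∏_{j=1}^m (X−x_j), and let z_1,…,z_{n−m} ∈ ℂ list the roots of L_{n−m}^{(α−1)} with multiplicity similarly. Set X_j = −x_j for 1 ≤ j ≤ m and X_{m+j} = z_j for 1 ≤ j ≤ n−m. For x ∈ ℂ let M(x) be the (n+1)×(n+1) matrix whose j-th row, for 1 ≤ j ≤ n, is (1, X_j, X_j², …, X_j^n), and whose last row is (1/α, x/(1+α), x²/(2+α), …, x^n/(n+α)). Then for every x ∈ ℂ, m!·(n−m)!·(∏_{1≤i<j≤n}(X_j−X_i))·L^{I,(α)}_{m,n}(x) = (−1)^{n−m}·(α+n)·det M(x); moreover the points X_1,…,X_n are pairwise distinct, so the Vandermonde factor ∏_{1≤i<j≤n}(X_j−X_i) is nonzero. -/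

import Mathlib

open Finset

/-- Generalized binomial coefficient `C(t, j) = t(t-1)⋯(t-j+1)/j!`. -/
noncomputable def genBinom (t : ℝ) (j : ℕ) : ℝ :=
  (∏ i ∈ Finset.range j, (t - i)) / (Nat.factorial j)

/-- Generalized Laguerre polynomial `L_n^{(α)}(x)` evaluated at complex `x`,
with the convention `L_n^{(α)} = 0` for negative integer index `n`. -/
noncomputable def laguerreC (α : ℝ) (n : ℤ) (x : ℂ) : ℂ :=
  if 0 ≤ n then
    ∑ k ∈ Finset.range (n.toNat + 1),
      ((-1 : ℂ) ^ k / (Nat.factorial k)) * (genBinom ((n : ℝ) + α) (n.toNat - k) : ℂ) * x ^ k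
  else 0

/-- Type-I exceptional `X_m`-Laguerre polynomial (complex variable). -/
noncomputable def XLagIC (m : ℕ) (α : ℝ) (n : ℕ) (x : ℂ) : ℂ :=
  laguerreC α (m : ℤ) (-x) * laguerreC (α - 1) ((n : ℤ) - m) x
    + laguerreC (α - 1) (m : ℤ) (-x) * laguerreC α ((n : ℤ) - m - 1) x

open Polynomial

theorem genBinom_succ (t : ℝ) (j : ℕ) :
    genBinom t (j+1) * (j+1) = genBinom t j * (t - j) := by
  unfold genBinom
  rw [Finset.prod_range_succ, Nat.factorial_succ]
  have : (Nat.factorial j : ℝ) ≠ 0 := by positivity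
  push_cast
  field_simp

theorem genBinom_absorb (t : ℝ) (j : ℕ) :
    genBinom (t+1) (j+1) * (j+1) = (t+1) * genBinom t j := by
  unfold genBinom
  rw [Finset.prod_range_succ', Nat.factorial_succ]
  have : (Nat.factorial j : ℝ) ≠ 0 := by positivity
  have h : ∀ i : ℕ, t + 1 - ((i + 1 : ℕ) : ℝ) = t - i := by intro i; push_cast; ring
  simp only [h]
  push_cast
  field_simp
  ring

theorem genBinom_pascal (t : ℝ) (j : ℕ) :
    genBinom (t+1) (j+1) = genBinom t (j+1) + genBinom t j := by
  have h1 := genBinom_succ t j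
  have h2 := genBinom_absorb t j
  have h3 : (j : ℝ) + 1 ≠ 0 := by positivity
  apply mul_right_cancel₀ h3
  linear_combination h2 - h1

theorem genBinom_shift (t : ℝ) (j : ℕ) :
    genBinom (t+1) j * (t + 1 - j) = (t+1) * genBinom t j := by
  have h1 := genBinom_succ (t+1) j
  have h2 := genBinom_absorb t j
  linear_combination h2 - h1

theorem genBinom_zero (t : ℝ) : genBinom t 0 = 1 := by simp [genBinom]

noncomputable def lagCo (a : ℝ) (n k : ℕ) : ℝ :=
  if k ≤ n then (-1) ^ k / (Nat.factorial k) * genBinom (n + a) (n - k) else 0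

noncomputable def lag (a : ℝ) (n : ℕ) : ℝ[X] :=
  ∑ k ∈ Finset.range (n+1), C (lagCo a n k) * X ^ k

theorem lag_coeff (a : ℝ) (n k : ℕ) : (lag a n).coeff k = lagCo a n k := by
  unfold lag
  simp only [finsetSum_coeff, coeff_C_mul, coeff_X_pow, mul_ite, mul_one, mul_zero]
  rw [Finset.sum_ite_eq]
  split_ifs with h
  · rfl
  · simp at h
    unfold lagCo
    rw [if_neg (by omega)]

theorem lagCo_gt (a : ℝ) (n k : ℕ) (h : n < k) : lagCo a n k = 0 := by
  unfold lagCo; rw [if_neg (by omega)]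

theorem lagCo_add (a : ℝ) (k j : ℕ) :
    lagCo a (k+j) k = (-1) ^ k / (Nat.factorial k) * genBinom (k + j + a) j := by
  unfold lagCo; rw [if_pos (by omega)]; simp

theorem lag_zero (a : ℝ) : lag a 0 = 1 := by
  simp [lag, lagCo, genBinom]

theorem lagCo_F1 (a : ℝ) (n k : ℕ) :
    lagCo a (n+1) (k+1) * (k+1) = - lagCo (a+1) n k := by
  rcases lt_or_ge n k with h | h
  · rw [lagCo_gt _ _ _ h, lagCo_gt _ _ _ (by omega)]; simp
  · obtain ⟨j, rfl⟩ := Nat.exists_eq_add_of_le h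
    rw [show k + j + 1 = (k+1) + j by ring, lagCo_add, lagCo_add, Nat.factorial_succ]
    have : (Nat.factorial k : ℝ) ≠ 0 := by positivity
    push_cast
    rw [show (k:ℝ) + 1 + j + a = k + j + (a + 1) by ring]
    field_simp
    ring

theorem lagCo_F2 (a : ℝ) (n k : ℕ) :
    lagCo (a+1) (n+1) k = lagCo a (n+1) k + lagCo (a+1) n k := by
  rcases lt_trichotomy k (n+1) with h | h | h
  · obtain ⟨j, rfl⟩ := Nat.exists_eq_add_of_le (Nat.lt_succ_iff.mp h)
    rw [show k + j + 1 = k + (j+1) by ring, lagCo_add, lagCo_add, lagCo_add]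
    have := genBinom_pascal (k + j + 1 + a) j
    push_cast
    rw [show (k:ℝ) + (j+1) + (a+1) = k + j + 1 + a + 1 by ring,
      show (k:ℝ) + (j+1) + a = k + j + 1 + a by ring,
      show (k:ℝ) + j + (a+1) = k + j + 1 + a by ring, this]
    ring
  · subst h
    rw [lagCo_gt (a+1) n (n+1) (by omega)]
    simp [lagCo, genBinom_zero]
  · rw [lagCo_gt _ _ _ (by omega), lagCo_gt _ _ _ (by omega), lagCo_gt _ _ _ (by omega)]; simp

theorem lagCo_F3 (a : ℝ) (n k : ℕ) :
    (k + a + 1) * lagCo (a+1) n k = (n + a + 1) * lagCo a n k := by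
  rcases lt_or_ge n k with h | h
  · rw [lagCo_gt _ _ _ h, lagCo_gt _ _ _ (by omega)]; simp
  · obtain ⟨j, rfl⟩ := Nat.exists_eq_add_of_le h
    rw [lagCo_add, lagCo_add]
    have := genBinom_shift (k + j + a) j
    push_cast
    rw [show (k:ℝ) + j + (a+1) = k + j + a + 1 by ring]
    linear_combination ((-1) ^ k / (Nat.factorial k) : ℝ) * this

theorem lagCo_ode (a : ℝ) (n k : ℕ) :
    (k + 1) * (k + a + 1) * lagCo a n (k+1) = (k - n) * lagCo a n k := by
  rcases lt_trichotomy n k with h | h | h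
  · rw [lagCo_gt _ _ _ h, lagCo_gt _ _ _ (by omega)]; simp
  · subst h; rw [lagCo_gt _ _ _ (by omega)]; simp
  · obtain ⟨j, rfl⟩ := Nat.exists_eq_add_of_le (Nat.succ_le_of_lt h)
    rw [lagCo_add, show k.succ + j = k + (j+1) by omega, lagCo_add, Nat.factorial_succ]
    have hg := genBinom_succ (k + (j + 1) + a) j
    have : (Nat.factorial k : ℝ) ≠ 0 := by positivity
    push_cast
    rw [show (k:ℝ) + 1 + j + a = k + (j + 1) + a by ring]
    field_simp
    rw [pow_succ]
    linear_combination (-1)^k * hg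

theorem coeff_X_mul_der (p : ℝ[X]) (k : ℕ) : (X * derivative p).coeff k = k * p.coeff k := by
  cases k with
  | zero => simp
  | succ k => rw [coeff_X_mul, coeff_derivative]; push_cast; ring

theorem lag_F1 (a : ℝ) (n : ℕ) : derivative (lag a (n+1)) = - lag (a+1) n := by
  ext k
  rw [coeff_derivative, coeff_neg, lag_coeff, lag_coeff, lagCo_F1]

theorem lag_F2 (a : ℝ) (n : ℕ) : lag (a+1) (n+1) = lag a (n+1) + lag (a+1) n := by
  ext k
  rw [coeff_add, lag_coeff, lag_coeff, lag_coeff, lagCo_F2]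

theorem lag_F3 (a : ℝ) (n : ℕ) :
    X * derivative (lag (a+1) n) + C (a+1) * lag (a+1) n = C (n+a+1) * lag a n := by
  ext k
  rw [coeff_add, coeff_X_mul_der, coeff_C_mul, coeff_C_mul, lag_coeff, lag_coeff]
  linear_combination lagCo_F3 a n k

theorem lag_ode (a : ℝ) (n : ℕ) :
    X * derivative (derivative (lag a n)) + C (a+1) * derivative (lag a n)
      - X * derivative (lag a n) + C (n:ℝ) * lag a n = 0 := by
  ext k
  rw [coeff_add, coeff_sub, coeff_add, coeff_X_mul_der, coeff_X_mul_der, coeff_C_mul, coeff_C_mul,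
    coeff_derivative, lag_coeff, lag_coeff, coeff_zero]
  linear_combination lagCo_ode a n k

theorem lag_F4 (a : ℝ) (n : ℕ) :
    C ((n:ℝ)+1) * lag a (n+1) + X * lag (a+1) n = C (n+1+a) * lag a n := by
  have h1 := lag_ode a (n+1)
  rw [lag_F1, derivative_neg] at h1
  have h2 := lag_F3 a n
  rw [show (n:ℝ)+1+a = n+a+1 by ring]
  push_cast at h1
  linear_combination h1 + h2

theorem lag_rec (a : ℝ) (n : ℕ) :
    C ((n:ℝ)+2) * lag a (n+2) = (C (2*n+3+a) - X) * lag a (n+1) - C (n+1+a) * lag a n := by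
  have h1 := lag_F4 a n
  have h2 := lag_F4 a (n+1)
  have h3 := lag_F2 a n
  simp only [map_add, map_mul, map_natCast, map_one, map_ofNat, Nat.cast_add, Nat.cast_one] at *
  have e : (C (3:ℝ) : ℝ[X]) = 3 := rfl
  have e2 : (C (2:ℝ) : ℝ[X]) = 2 := rfl
  linear_combination h2 - h1 - X * h3

theorem lag_one (a : ℝ) : lag a 1 = C (1 + a) - X := by
  have h := lag_F4 a 0
  simp [lag_zero] at h
  rw [map_add, map_one]
  linear_combination h

theorem lagCo_sign (a : ℝ) (ha : -1 < a) (n k : ℕ) (h : k ≤ n) : 0 < (-1) ^ k * lagCo a n k := by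
  obtain ⟨j, rfl⟩ := Nat.exists_eq_add_of_le h
  rw [lagCo_add]
  have : (0:ℝ) < genBinom (k + j + a) j := by
    unfold genBinom
    apply div_pos _ (by positivity)
    apply Finset.prod_pos
    intro i hi
    have : i + 1 ≤ j := by simpa using hi
    have : (i:ℝ) + 1 ≤ j := by exact_mod_cast this
    have : (0:ℝ) ≤ k := by positivity
    linarith
  have e : ((-1:ℝ)^k) * (-1)^k = 1 := by rw [← mul_pow]; simp
  have : (-1:ℝ) ^ k * ((-1) ^ k / (Nat.factorial k) * genBinom (k + j + a) j) =
     genBinom (k + j + a) j / (Nat.factorial k) := by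
    linear_combination (genBinom (k + j + a) j / (Nat.factorial k)) * e
  rw [this]
  positivity

theorem lag_pos (a : ℝ) (ha : -1 < a) (n : ℕ) (x : ℝ) (hx : x ≤ 0) : 0 < (lag a n).eval x := by
  unfold lag
  rw [eval_finsetSum]
  apply Finset.sum_pos'
  · intro k hk
    have h1 := (lagCo_sign a ha n k (by simp at hk; omega)).le
    simp only [eval_mul, eval_C, eval_pow, eval_X]
    have : lagCo a n k * x ^ k = ((-1) ^ k * lagCo a n k) * (-x)^k := by
      rw [neg_pow x]
      have e : ((-1:ℝ)^k) * (-1)^k = 1 := by rw [← mul_pow]; simp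
      linear_combination -(lagCo a n k * x ^ k) * e
    rw [this]
    have : 0 ≤ -x := by linarith
    positivity
  · refine ⟨0, by simp, ?_⟩
    have := lagCo_sign a ha n 0 (by omega)
    simpa using this

/-- Wronskian-type argument: real roots are simple. -/
theorem lag_W (a : ℝ) (ha : -1 < a) (x : ℝ) (n : ℕ) :
    (derivative (lag a (n+1))).eval x * (lag a n).eval x
      - (lag a (n+1)).eval x * (derivative (lag a n)).eval x < 0 := by
  induction n with
  | zero => simp [lag_zero, lag_one]
  | succ n ih =>
    have h := lag_rec a n
    have h1 := congrArg (eval x) h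
    have h2 := congrArg (fun p => eval x (derivative p)) h
    simp only [derivative_mul, derivative_C, derivative_X, derivative_sub, eval_mul, eval_sub, eval_add, eval_C, eval_X,
      eval_zero, eval_one] at h1 h2
    have hn : (0:ℝ) ≤ n := by positivity
    set A := eval x (lag a (n+2))
    set A' := eval x (derivative (lag a (n+2)))
    set B := eval x (lag a (n+1))
    set B' := eval x (derivative (lag a (n+1)))
    set D := eval x (lag a n)
    set D' := eval x (derivative (lag a n))
    change A' * B - A * B' < 0
    have key : ((n:ℝ)+2) * (A' * B - A * B') = -B^2 + (n+1+a) * (B' * D - B * D') := by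
      linear_combination B * h2 - B' * h1
    have : (n+1+a) * (B' * D - B * D') < 0 := mul_neg_of_pos_of_neg (by linarith) ih
    have : ((n:ℝ)+2) * (A' * B - A * B') < 0 := by rw [key]; nlinarith [sq_nonneg B]
    by_contra hc
    push Not at hc
    have := mul_nonneg (show (0:ℝ) ≤ n + 2 by linarith) hc
    linarith

theorem lag_Im (a : ℝ) (ha : -1 < a) (z : ℂ) (hz : z.im ≠ 0) (n : ℕ) :
    z.im * ((aeval z (lag a (n+1))).im * (aeval z (lag a n)).re
      - (aeval z (lag a (n+1))).re * (aeval z (lag a n)).im) < 0 := by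
  induction n with
  | zero => simp [lag_zero, lag_one]; positivity
  | succ n ih =>
    have h := congrArg (aeval z) (lag_rec a n)
    simp only [map_mul, map_sub, aeval_C, aeval_X] at h
    have h1 := congrArg Complex.re h
    have h2 := congrArg Complex.im h
    simp only [Complex.coe_algebraMap, Complex.mul_re, Complex.mul_im, Complex.sub_re, Complex.sub_im,
      Complex.ofReal_re, Complex.ofReal_im] at h1 h2
    have hn : (0:ℝ) ≤ n := by positivity
    set A := (aeval z (lag a (n+2))).re
    set A' := (aeval z (lag a (n+2))).im
    set B := (aeval z (lag a (n+1))).re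
    set B' := (aeval z (lag a (n+1))).im
    set D := (aeval z (lag a n)).re
    set D' := (aeval z (lag a n)).im
    change z.im * (A' * B - A * B') < 0
    have key : ((n:ℝ)+2) * (z.im * (A' * B - A * B')) =
        - z.im^2 * (B^2 + B'^2) + (n+1+a) * (z.im * (B' * D - B * D')) := by
      linear_combination z.im * (B * h2 - B' * h1)
    have : (n+1+a) * (z.im * (B' * D - B * D')) < 0 := mul_neg_of_pos_of_neg (by linarith) ih
    have : 0 ≤ z.im^2 * (B^2 + B'^2) := by positivity
    by_contra hc
    push Not at hc
    have := mul_nonneg (show (0:ℝ) ≤ n + 2 by linarith) hc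
    linarith

theorem aeval_ofReal_lag (p : ℝ[X]) (x : ℝ) : aeval (x : ℂ) p = ((p.eval x : ℝ) : ℂ) := by
  exact aeval_algebraMap_apply_eq_algebraMap_eval x p

/-- All roots are real and positive. -/
theorem lag_root (a : ℝ) (ha : -1 < a) (n : ℕ) (z : ℂ) (h : aeval z (lag a n) = 0) :
    z.im = 0 ∧ 0 < z.re := by
  have him : z.im = 0 := by
    by_contra hz
    cases n with
    | zero => simp [lag_zero] at h
    | succ n =>
      have := lag_Im a ha z hz n
      rw [h] at this
      simp at this
  refine ⟨him, ?_⟩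
  by_contra hc
  push Not at hc
  have hz : z = (z.re : ℂ) := by apply Complex.ext <;> simp [him]
  rw [hz, aeval_ofReal_lag] at h
  have := lag_pos a ha n _ hc
  rw [Complex.ofReal_eq_zero] at h
  linarith

theorem lag_simple (a : ℝ) (ha : -1 < a) (n : ℕ) (z : ℂ) (h : aeval z (lag a n) = 0)
    (h' : aeval z (derivative (lag a n)) = 0) : False := by
  have hz : z = (z.re : ℂ) := by
    apply Complex.ext <;> simp [(lag_root a ha n z h).1]
  rw [hz, aeval_ofReal_lag, Complex.ofReal_eq_zero] at h h'
  cases n with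
  | zero => simp [lag_zero] at h
  | succ n =>
    have := lag_W a ha z.re n
    rw [h, h'] at this
    simp at this

theorem laguerreC_eq (a : ℝ) (n : ℕ) (x : ℂ) : laguerreC a (n : ℤ) x = aeval x (lag a n) := by
  unfold laguerreC lag
  rw [if_pos (by omega), map_sum]
  simp only [Int.toNat_natCast]
  apply Finset.sum_congr rfl
  intro k hk
  have : k ≤ n := by simp at hk; omega
  simp [lagCo, this]

theorem prod_inj (a : ℝ) (ha : -1 < a) (n : ℕ) (x : Fin n → ℂ) (c : ℂ)
    (hx : ∀ X : ℂ, aeval X (lag a n) = c * ∏ j, (X - x j)) : Function.Injective x := by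
  intro i j hij
  by_contra hne
  have hp : (lag a n).map (algebraMap ℝ ℂ) = C c * ∏ j, (X - C (x j)) := by
    apply Polynomial.funext
    intro r
    rw [eval_map_algebraMap, hx]
    simp [eval_prod]
  rw [← Finset.mul_prod_erase _ _ (Finset.mem_univ i),
    ← Finset.mul_prod_erase _ _ (Finset.mem_erase.mpr ⟨Ne.symm hne, Finset.mem_univ j⟩), hij] at hp
  apply lag_simple a ha n (x j)
  · rw [← eval_map_algebraMap, hp]; simp
  · rw [← eval_map_algebraMap, ← derivative_map, hp]; simp [derivative_mul]

theorem prod_root (a : ℝ) (ha : -1 < a) (n : ℕ) (x : Fin n → ℂ) (c : ℂ)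
    (hx : ∀ X : ℂ, aeval X (lag a n) = c * ∏ j, (X - x j)) (i : Fin n) : 0 < (x i).re := by
  apply (lag_root a ha n (x i) _).2
  rw [hx, Finset.prod_eq_zero (Finset.mem_univ i) (sub_self _), mul_zero]

theorem vand_snoc (n : ℕ) (Y : Fin n → ℂ) (t : ℂ) :
    (Matrix.vandermonde (Fin.snoc Y t : Fin (n+1) → ℂ)).det =
      (∏ i : Fin n, ∏ j ∈ Finset.Ioi i, (Y j - Y i)) * ∏ j, (t - Y j) := by
  rw [Matrix.det_vandermonde, Fin.prod_univ_castSucc, ← Finset.prod_mul_distrib]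
  have h0 : Finset.Ioi (Fin.last n) = ∅ := by ext i; simp [Fin.le_last]
  rw [h0, Finset.prod_empty, mul_one]
  apply Finset.prod_congr rfl
  intro i _
  have h1 : Finset.Ioi (Fin.castSucc i) =
      insert (Fin.last n) ((Finset.Ioi i).map Fin.castSuccEmb) := by
    rw [Fin.map_castSuccEmb_Ioi]
    ext j
    simp only [Finset.mem_Ioi, Finset.mem_insert, Finset.mem_Ioo, Fin.lt_def, Fin.ext_iff,
      Fin.val_castSucc, Fin.val_last]
    omega
  rw [h1, Finset.prod_insert (by simp), Finset.prod_map, mul_comm]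
  simp

theorem det_last (n : ℕ) (Y : Fin n → ℂ) (v : Fin (n+1) → ℂ) :
    (Matrix.of fun (i k : Fin (n + 1)) =>
      if h : (i : ℕ) < n then (Y ⟨i, h⟩) ^ (k : ℕ) else v k).det =
      (∏ i : Fin n, ∏ j ∈ Finset.Ioi i, (Y j - Y i)) *
        ∑ k : Fin (n+1), (∏ j, (X - C (Y j)) : ℂ[X]).coeff k * v k := by
  obtain ⟨c, hc⟩ : ∃ c : Fin (n+1) → ℂ, ∀ v : Fin (n+1) → ℂ,
      (Matrix.of fun (i k : Fin (n + 1)) =>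
        if h : (i : ℕ) < n then (Y ⟨i, h⟩) ^ (k : ℕ) else v k).det = ∑ k, c k * v k := by
    refine ⟨fun k => (-1) ^ (n + (k:ℕ)) *
      (Matrix.of fun i k' : Fin n => (Y i) ^ ((k.succAbove k' : Fin (n+1)) : ℕ)).det, fun v => ?_⟩
    rw [Matrix.det_succ_row _ (Fin.last n)]
    apply Finset.sum_congr rfl
    intro k _
    have : (Matrix.submatrix (Matrix.of fun (i k : Fin (n + 1)) =>
        if h : (i : ℕ) < n then (Y ⟨i, h⟩) ^ (k : ℕ) else v k) (Fin.last n).succAbove k.succAbove)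
        = (Matrix.of fun i k' : Fin n => (Y i) ^ ((k.succAbove k' : Fin (n+1)) : ℕ)) := by
      ext i k'
      simp
    rw [this]
    simp
    ring
  have hp : (∑ k : Fin (n+1), C (c k) * X ^ (k:ℕ) : ℂ[X]) =
      C (∏ i : Fin n, ∏ j ∈ Finset.Ioi i, (Y j - Y i)) * ∏ j, (X - C (Y j)) := by
    apply Polynomial.funext
    intro t
    have h1 := hc (fun k => t ^ (k:ℕ))
    have h2 := vand_snoc n Y t
    have h3 : (Matrix.of fun (i k : Fin (n + 1)) =>
        if h : (i : ℕ) < n then (Y ⟨i, h⟩) ^ (k : ℕ) else t ^ (k:ℕ)) =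
        Matrix.vandermonde (Fin.snoc Y t : Fin (n+1) → ℂ) := by
      ext i k
      simp only [Matrix.of_apply, Matrix.vandermonde_apply]
      induction i using Fin.lastCases with
      | last => simp
      | cast i => simp
    rw [h3, h2] at h1
    simp only [eval_finsetSum, eval_mul, eval_C, eval_pow, eval_X, eval_prod, eval_sub]
    exact h1.symm
  rw [hc, Finset.mul_sum]
  apply Finset.sum_congr rfl
  intro k _
  have h := congrArg (fun p => coeff p (k:ℕ)) hp
  simp only [finsetSum_coeff, coeff_C_mul, coeff_X_pow, Fin.val_inj, mul_ite, mul_one,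
    mul_zero, Finset.sum_ite_eq, Finset.mem_univ, if_true] at h
  rw [h]
  ring

/-- `m`-th Laguerre polynomial at `-X`. -/
noncomputable def lagNeg (a : ℝ) (n : ℕ) : ℝ[X] := (lag a n).comp (-X)

/-- Polynomial form of the exceptional Laguerre polynomial, via the derivative rule. -/
noncomputable def xlag (m k : ℕ) (a : ℝ) : ℝ[X] :=
  lagNeg (a+1) m * lag a k - lagNeg a m * derivative (lag a k)

theorem der_lagNeg (a : ℝ) (n : ℕ) :
    derivative (lagNeg a n) = - (derivative (lag a n)).comp (-X) := by
  simp [lagNeg, derivative_comp]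

theorem xlag_key (m k : ℕ) (a : ℝ) :
    X * derivative (xlag m k a) + C (a+1) * xlag m k a =
      C ((m:ℝ) + k + a + 1) * (lagNeg a m * lag a k) := by
  have hA : X * derivative (lagNeg (a+1) m) + C (a+1) * lagNeg (a+1) m
      = C ((m:ℝ)+a+1) * lagNeg a m := by
    have := congrArg (fun p : ℝ[X] => p.comp (-X)) (lag_F3 a m)
    simp only [add_comp, mul_comp, X_comp, C_comp] at this
    rw [der_lagNeg]
    unfold lagNeg
    linear_combination this
  have hB : lagNeg (a+1) m = lagNeg a m + derivative (lagNeg a m) := by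
    rw [der_lagNeg]
    unfold lagNeg
    cases m with
    | zero => simp [lag_zero]
    | succ m => rw [lag_F1, lag_F2]; simp
  have ho := lag_ode a k
  unfold xlag
  simp only [derivative_sub, derivative_mul]
  simp only [map_add, map_one, map_natCast] at *
  linear_combination lag a k * hA + X * derivative (lag a k) * hB - lagNeg a m * ho

theorem xlag_coeff (m k : ℕ) (a : ℝ) (j : ℕ) :
    ((j:ℝ) + (a+1)) * (xlag m k a).coeff j =
      ((m:ℝ) + k + a + 1) * (lagNeg a m * lag a k).coeff j := by
  have := congrArg (fun p => coeff p j) (xlag_key m k a)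
  simp only [coeff_add, coeff_X_mul_der, coeff_C_mul] at this
  linear_combination this

theorem XLagIC_eq (m k : ℕ) (α : ℝ) (w : ℂ) :
    XLagIC m α (m+k) w = aeval w (xlag m k (α - 1)) := by
  unfold XLagIC xlag lagNeg
  have e1 : (((m+k:ℕ):ℤ) - m) = (k:ℤ) := by push_cast; ring
  have e2 : laguerreC α ((k:ℤ) - 1) w = - aeval w (derivative (lag (α-1) k)) := by
    cases k with
    | zero => simp [laguerreC, lag_zero]
    | succ k =>
      rw [lag_F1, show (((k+1:ℕ):ℤ) - 1) = (k:ℤ) by push_cast; ring, laguerreC_eq]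
      simp
  rw [e1, e2, laguerreC_eq, laguerreC_eq, laguerreC_eq]
  simp [aeval_comp]
  ring

theorem lag_natDegree (a : ℝ) (n : ℕ) : (lag a n).natDegree ≤ n := by
  apply natDegree_le_iff_coeff_eq_zero.mpr
  intro k hk
  rw [lag_coeff, lagCo_gt _ _ _ hk]

theorem prod_poly (m k : ℕ) (a : ℝ) (x : Fin m → ℂ) (z : Fin k → ℂ)
    (hx : ∀ X : ℂ, aeval X (lag a m) = ((-1 : ℂ) ^ m / (Nat.factorial m : ℂ)) * ∏ j, (X - x j))
    (hz : ∀ X : ℂ, aeval X (lag a k) = ((-1 : ℂ) ^ k / (Nat.factorial k : ℂ)) * ∏ j, (X - z j)) :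
    C ((Nat.factorial m : ℂ) * (Nat.factorial k : ℂ)) *
        (lagNeg a m * lag a k).map (algebraMap ℝ ℂ) =
      C ((-1 : ℂ) ^ k) * ∏ j, (X - C (Fin.append (fun i => -x i) z j)) := by
  apply Polynomial.funext
  intro t
  simp only [eval_mul, eval_C, eval_map_algebraMap, map_mul, eval_prod, eval_sub, eval_X]
  rw [lagNeg, aeval_comp, hz, Fin.prod_univ_add]
  simp only [map_neg, aeval_X, Fin.append_left, Fin.append_right]
  rw [hx]
  have : ∏ j, (-t - x j) = (-1)^m * ∏ j, (t - - x j) := by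
    have : ∀ j, -t - x j = (-1) * (t - - x j) := by intro j; ring
    simp only [this, Finset.prod_mul_distrib]
    simp
  rw [this]
  have h1 : (Nat.factorial m : ℂ) ≠ 0 := by exact_mod_cast Nat.factorial_ne_zero m
  have h2 : (Nat.factorial k : ℂ) ≠ 0 := by exact_mod_cast Nat.factorial_ne_zero k
  have e : ((-1:ℂ)^m) * (-1)^m = 1 := by rw [← mul_pow]; simp
  field_simp
  linear_combination (∏ j, (t - - x j)) * (∏ j, (t - z j)) * e

theorem xlag_natDegree (m k : ℕ) (α : ℝ) (hα : 0 < α) : (xlag m k (α-1)).natDegree ≤ m + k := by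
  apply natDegree_le_iff_coeff_eq_zero.mpr
  intro j hj
  have h := xlag_coeff m k (α-1) j
  have hd : (lagNeg (α-1) m * lag (α-1) k).natDegree ≤ m + k := by
    apply natDegree_mul_le_of_le _ (lag_natDegree _ _)
    unfold lagNeg
    rw [natDegree_comp]
    simpa using lag_natDegree _ _
  rw [coeff_eq_zero_of_natDegree_lt (lt_of_le_of_lt hd hj), mul_zero] at h
  rcases mul_eq_zero.mp h with h | h
  · have : (0:ℝ) ≤ j := by positivity
    linarith
  · exact h

theorem stmt5 (m : ℕ) (α : ℝ) (hα : 0 < α) (n : ℕ) (hmn : m ≤ n)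
    (x : Fin m → ℂ) (z : Fin (n - m) → ℂ)
    (hx : ∀ X : ℂ, laguerreC (α - 1) (m : ℤ) X =
      ((-1 : ℂ) ^ m / (Nat.factorial m : ℂ)) * ∏ j, (X - x j))
    (hz : ∀ X : ℂ, laguerreC (α - 1) ((n : ℤ) - m) X =
      ((-1 : ℂ) ^ (n - m) / (Nat.factorial (n - m) : ℂ)) * ∏ j, (X - z j))
    (Xp : Fin n → ℂ)
    (hXp : Xp = fun j => Fin.append (fun i => -x i) z
      (Fin.cast (show n = m + (n - m) by omega) j))
    (M : ℂ → Matrix (Fin (n + 1)) (Fin (n + 1)) ℂ)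
    (hM : ∀ w : ℂ, M w = Matrix.of fun (i k : Fin (n + 1)) =>
      if h : (i : ℕ) < n then (Xp ⟨i, h⟩) ^ (k : ℕ)
      else w ^ (k : ℕ) / (((k : ℕ) : ℂ) + (α : ℂ))) :
    (∀ w : ℂ,
      (Nat.factorial m : ℂ) * (Nat.factorial (n - m) : ℂ) *
          (∏ i : Fin n, ∏ j ∈ Finset.Ioi i, (Xp j - Xp i)) * XLagIC m α n w =
        (-1 : ℂ) ^ (n - m) * ((α : ℂ) + n) * (M w).det) ∧
      Function.Injective Xp := by
  obtain ⟨k, rfl⟩ := Nat.exists_eq_add_of_le hmn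
  have hk : m + k - m = k := by omega
  have ecast : (((m+k:ℕ):ℤ) - m) = (k:ℤ) := by push_cast; ring
  rw [ecast] at hz
  have hXp' : ∃ z' : Fin k → ℂ, Xp = Fin.append (fun i => -x i) z' ∧
      (∀ X : ℂ, laguerreC (α - 1) (k : ℤ) X =
      ((-1 : ℂ) ^ k / (Nat.factorial k : ℂ)) * ∏ j, (X - z' j)) := by
    refine ⟨fun j => z (Fin.cast hk.symm j), ?_, ?_⟩
    · rw [hXp]
      funext j
      induction j using Fin.addCases with
      | left i =>
        rw [Fin.append_left]
        exact Fin.append_left (fun i => -x i) z i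
      | right i =>
        rw [Fin.append_right]
        exact Fin.append_right (fun i => -x i) z (Fin.cast hk.symm i)
    · intro X
      rw [hz, Fintype.prod_equiv (finCongr hk) (fun j => X - z j)
        (fun j => X - z (Fin.cast hk.symm j)) (fun j => rfl)]
      congr 1
      simp only [hk]
  obtain ⟨z', hXp', hz'⟩ := hXp'
  clear hz hXp
  simp only [laguerreC_eq] at hx hz'
  have ha : -1 < α - 1 := by linarith
  rw [hk]
  constructor
  · intro w
    rw [hM, det_last (m+k) Xp (fun j => w ^ (j:ℕ) / (((j : ℕ) : ℂ) + (α : ℂ))), XLagIC_eq]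
    have hp := prod_poly m k (α-1) x z' hx hz'
    rw [← hXp'] at hp
    rw [aeval_eq_sum_range' (lt_of_le_of_lt (xlag_natDegree m k α hα) (Nat.lt_succ_self _)),
      ← Fin.sum_univ_eq_sum_range (fun j => (xlag m k (α-1)).coeff j • w ^ j),
      Finset.mul_sum, Finset.mul_sum, Finset.mul_sum]
    apply Finset.sum_congr rfl
    intro j _
    have h1 := congrArg (fun p => coeff p (j:ℕ)) hp
    simp only [coeff_C_mul, coeff_map] at h1
    have h2 := congrArg (fun r : ℝ => (r : ℂ)) (xlag_coeff m k (α-1) j)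
    push_cast at h2
    have hne : ((j:ℕ):ℂ) + (α:ℂ) ≠ 0 := by
      have : (0:ℝ) < (j:ℕ) + α := by positivity
      exact_mod_cast this.ne'
    rw [Complex.real_smul]
    rw [Complex.coe_algebraMap] at h1
    push_cast
    field_simp
    linear_combination (∏ i, ∏ j ∈ Finset.Ioi i, (Xp j - Xp i)) * w ^ (j:ℕ) *
      ((Nat.factorial m : ℂ) * (Nat.factorial k : ℂ) * h2 + ((α:ℂ) + (m + k)) * h1)
  · rw [hXp', Fin.append_injective_iff]
    refine ⟨?_, prod_inj _ ha k z' _ hz', ?_⟩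
    · intro i j hij
      exact prod_inj _ ha m x _ hx (neg_injective hij)
    · intro i j hij
      have h1 := prod_root _ ha m x _ hx i
      have h2 := prod_root _ ha k z' _ hz' j
      rw [← hij] at h2
      simp at h2
      linarith
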